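/- If two gentle algebras A and A′ are AG-equivalent, then gl.dim A < ∞ if and only if gl.dim A′ < ∞. -/

import Mathlib

open MulOpposite DirectSum

set_option autoImplicit false

/-- The combinatorial data of a finite quiver together with a set of
length-two relations (`rel a b` means that the length-two path `a·b` lies in
the admissible ideal `I`). -/
structure GentleData : Type 1 where
  V : Type
  A : Type
  [fintypeV : Fintype V]
  [fintypeA : Fintype A]
  [decEqV : DecidableEq V]
  [decEqA : DecidableEq A]
  src : A → V
  tgt : A → V
  rel : A → A → Prop

attribute [instance] GentleData.fintypeV GentleData.fintypeA GentleData.decEqV GentleData.decEqA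

/-- The gentleness conditions on a bound quiver `(Q, I)`:
relations are composable length-two paths; at most two arrows start
(resp. end) at every vertex; for every arrow `β` there is at most one arrow `α`
with `αβ ∉ I` and at most one with `αβ ∈ I`, and dually; and there is a bound
on the length of paths avoiding relations (admissibility). -/
def IsGentle (Q : GentleData) : Prop :=
  (∀ a b, Q.rel a b → Q.tgt a = Q.src b) ∧
  (∀ v : Q.V, Set.ncard {a : Q.A | Q.src a = v} ≤ 2) ∧
  (∀ v : Q.V, Set.ncard {a : Q.A | Q.tgt a = v} ≤ 2) ∧
  (∀ b : Q.A, Set.ncard {a : Q.A | Q.tgt a = Q.src b ∧ ¬ Q.rel a b} ≤ 1) ∧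
  (∀ b : Q.A, Set.ncard {a : Q.A | Q.tgt a = Q.src b ∧ Q.rel a b} ≤ 1) ∧
  (∀ a : Q.A, Set.ncard {b : Q.A | Q.src b = Q.tgt a ∧ ¬ Q.rel a b} ≤ 1) ∧
  (∀ a : Q.A, Set.ncard {b : Q.A | Q.src b = Q.tgt a ∧ Q.rel a b} ≤ 1) ∧
  (∃ N : ℕ, ∀ p : ℕ → Q.A, ¬ ∀ i, i < N → (Q.tgt (p i) = Q.src (p (i+1)) ∧ ¬ Q.rel (p i) (p (i+1))))

/-- Generators of the path algebra: one generator for each vertex (the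
corresponding trivial path) and one for each arrow. -/
inductive GenSym (Q : GentleData) : Type
  | vertex : Q.V → GenSym Q
  | arrow : Q.A → GenSym Q

/-- The defining relations of the algebra `kQ/I`: the trivial paths are
orthogonal idempotents summing to `1`, arrows are compatible with the trivial
paths at their source and target, and the chosen length-two paths vanish. -/
inductive GentleRel (k : Type) [Field k] (Q : GentleData) :
    FreeAlgebra k (GenSym Q) → FreeAlgebra k (GenSym Q) → Prop
  | idem (v : Q.V) : GentleRel k Q
      (FreeAlgebra.ι k (GenSym.vertex v) * FreeAlgebra.ι k (GenSym.vertex v))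
      (FreeAlgebra.ι k (GenSym.vertex v))
  | orth (v w : Q.V) (h : v ≠ w) : GentleRel k Q
      (FreeAlgebra.ι k (GenSym.vertex v) * FreeAlgebra.ι k (GenSym.vertex w)) 0
  | sum_idem : GentleRel k Q (∑ v : Q.V, FreeAlgebra.ι k (GenSym.vertex v)) 1
  | src_mul (a : Q.A) : GentleRel k Q
      (FreeAlgebra.ι k (GenSym.vertex (Q.src a)) * FreeAlgebra.ι k (GenSym.arrow a))
      (FreeAlgebra.ι k (GenSym.arrow a))
  | mul_tgt (a : Q.A) : GentleRel k Q
      (FreeAlgebra.ι k (GenSym.arrow a) * FreeAlgebra.ι k (GenSym.vertex (Q.tgt a)))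
      (FreeAlgebra.ι k (GenSym.arrow a))
  | relation (a b : Q.A) (h : Q.rel a b) : GentleRel k Q
      (FreeAlgebra.ι k (GenSym.arrow a) * FreeAlgebra.ι k (GenSym.arrow b)) 0

/-- The algebra `A = kQ/I` presented by the bound quiver `Q`. -/
abbrev GentleAlgebra (k : Type) [Field k] (Q : GentleData) : Type :=
  RingQuot (GentleRel k Q)

/-- The image in `kQ/I` of a generator. -/
noncomputable def ofGen (k : Type) [Field k] (Q : GentleData) (x : GenSym Q) :
    GentleAlgebra k Q :=
  RingQuot.mkAlgHom k (GentleRel k Q) (FreeAlgebra.ι k x)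

/-- The idempotent `e_v ∈ kQ/I` of a vertex `v`. -/
noncomputable def idemOf (k : Type) [Field k] (Q : GentleData) (v : Q.V) :
    GentleAlgebra k Q :=
  ofGen k Q (GenSym.vertex v)

/-- The element of `kQ/I` given by an arrow `a`. -/
noncomputable def arrOf (k : Type) [Field k] (Q : GentleData) (a : Q.A) :
    GentleAlgebra k Q :=
  ofGen k Q (GenSym.arrow a)

/-- The indecomposable projective right module `e_v A`, as a right submodule
(i.e. `Aᵐᵒᵖ`-submodule) of `A`. -/
noncomputable def vertexModule (k : Type) [Field k] (Q : GentleData) (v : Q.V) :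
    Submodule (GentleAlgebra k Q)ᵐᵒᵖ (GentleAlgebra k Q) :=
  Submodule.span (GentleAlgebra k Q)ᵐᵒᵖ {idemOf k Q v}

/-- The right module `αA` generated by an arrow `α`, as a right submodule of `A`. -/
noncomputable def arrowModule (k : Type) [Field k] (Q : GentleData) (a : Q.A) :
    Submodule (GentleAlgebra k Q)ᵐᵒᵖ (GentleAlgebra k Q) :=
  Submodule.span (GentleAlgebra k Q)ᵐᵒᵖ {arrOf k Q a}

/-- An oriented cycle `c` of length `ℓ` with full relations:
`t(cᵢ) = s(cᵢ₊₁)` and `cᵢ cᵢ₊₁ ∈ I` for all `i` (indices modulo `ℓ`). -/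
def IsOCFCycle (Q : GentleData) {ℓ : ℕ} (c : ZMod ℓ → Q.A) : Prop :=
  ∀ i : ZMod ℓ, Q.tgt (c i) = Q.src (c (i + 1)) ∧ Q.rel (c i) (c (i + 1))

/-- The arrow `a` lies on some oriented cycle with full relations. -/
def OnOCFCycle (Q : GentleData) (a : Q.A) : Prop :=
  ∃ ℓ : ℕ, 1 ≤ ℓ ∧ ∃ c : ZMod ℓ → Q.A, IsOCFCycle Q c ∧ ∃ i : ZMod ℓ, c i = a

/-- The whole quiver `(Q, I)` is an oriented cycle of some length `ℓ ≥ 1` with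
full relations. -/
def QuiverIsOCF (Q : GentleData) : Prop :=
  ∃ ℓ : ℕ, 1 ≤ ℓ ∧ ∃ (e : Q.V ≃ ZMod ℓ) (f : Q.A ≃ ZMod ℓ),
    (∀ a, e (Q.src a) = f a) ∧ (∀ a, e (Q.tgt a) = f a + 1) ∧
    (∀ a b, Q.rel a b ↔ f b = f a + 1)

/-- The quiver `(Q, I)` is a single point: exactly one vertex and no arrows. -/
def QuiverIsPoint (Q : GentleData) : Prop :=
  (∃ v : Q.V, ∀ w : Q.V, w = v) ∧ IsEmpty Q.A

/-- `v` is a common vertex of two distinct oriented cycles with full relations. -/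
def TwoCyclesAt (Q : GentleData) (v : Q.V) : Prop :=
  ∃ (ℓ ℓ' : ℕ), 1 ≤ ℓ ∧ 1 ≤ ℓ' ∧ ∃ (c : ZMod ℓ → Q.A) (c' : ZMod ℓ' → Q.A),
    IsOCFCycle Q c ∧ IsOCFCycle Q c' ∧ Function.Injective c ∧ Function.Injective c' ∧
    (∃ i, Q.tgt (c i) = v) ∧ (∃ j, Q.tgt (c' j) = v) ∧ Set.range c ≠ Set.range c'

/-- The set of vertices lying on an oriented cycle with full relations. -/
def ocfVertexSet (Q : GentleData) : Set Q.V :=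
  {v | ∃ a : Q.A, OnOCFCycle Q a ∧ Q.tgt a = v}

/-- Oriented cycles with full relations, identified up to cyclic rotation. -/
def ocfCycleSetoid (Q : GentleData) (ℓ : ℕ) :
    Setoid {c : ZMod ℓ → Q.A // IsOCFCycle Q c ∧ Function.Injective c} where
  r c c' := ∃ t : ZMod ℓ, ∀ i, c'.1 i = c.1 (i + t)
  iseqv := by
    refine ⟨fun c => ⟨0, fun i => by rw [add_zero]⟩, ?_, ?_⟩
    · rintro c c' ⟨t, ht⟩
      exact ⟨-t, fun i => by rw [ht (i + -t), neg_add_cancel_right]⟩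
    · rintro a b c ⟨t, ht⟩ ⟨s, hs⟩
      exact ⟨s + t, fun i => by rw [hs i, ht (i + s), add_assoc]⟩

/-- `AGzero Q ℓ` is the value `φ_A(0, ℓ)` of the AG-invariant: the number of
oriented cycles of length `ℓ` with full relations, counted up to rotation. -/
noncomputable def AGzero (Q : GentleData) (ℓ : ℕ) : ℕ :=
  Nat.card (Quotient (ocfCycleSetoid Q ℓ))

/-- A (nontrivial) forbidden path with arrows `p 0, …, p (m-1)`:
all consecutive length-two subpaths lie in `I`. -/
def IsForbiddenPath (Q : GentleData) (m : ℕ) (p : ℕ → Q.A) : Prop :=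
  ∀ i : ℕ, i + 1 < m → Q.tgt (p i) = Q.src (p (i + 1)) ∧ Q.rel (p i) (p (i + 1))

/-- A (nontrivial) forbidden thread: a maximal forbidden path (of `m ≥ 1`
arrows), i.e. one which cannot be extended on either side. -/
def IsForbiddenThread (Q : GentleData) (m : ℕ) (p : ℕ → Q.A) : Prop :=
  1 ≤ m ∧ IsForbiddenPath Q m p ∧
  (∀ b : Q.A, Q.tgt b = Q.src (p 0) → ¬ Q.rel b (p 0)) ∧
  (∀ b : Q.A, Q.src b = Q.tgt (p (m - 1)) → ¬ Q.rel (p (m - 1)) b)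

/-- A trivial forbidden thread at a vertex `v` (of length `0`). -/
def IsTrivialForbiddenThread (Q : GentleData) (v : Q.V) : Prop :=
  ({a : Q.A | Q.tgt a = v} = ∅) ∨ ({a : Q.A | Q.src a = v} = ∅) ∨
  (∃ b b' : Q.A, {a : Q.A | Q.tgt a = v} = {b} ∧ {a : Q.A | Q.src a = v} = {b'} ∧ ¬ Q.rel b b')

/-- The set of lengths of the forbidden threads of finite length. -/
def finiteForbiddenThreadLengths (Q : GentleData) : Set ℕ∞ :=
  {n : ℕ∞ | (n = 0 ∧ ∃ v : Q.V, IsTrivialForbiddenThread Q v) ∨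
    (∃ m : ℕ, n = (m : ℕ∞) ∧ ∃ p : ℕ → Q.A, IsForbiddenThread Q m p)}

/-- The set of lengths of all forbidden threads; an oriented cycle with full
relations gives rise to a forbidden thread of infinite length. -/
def forbiddenThreadLengths (Q : GentleData) : Set ℕ∞ :=
  finiteForbiddenThreadLengths Q ∪
    {n : ℕ∞ | n = ⊤ ∧ ∃ ℓ : ℕ, 1 ≤ ℓ ∧ ∃ c : ZMod ℓ → Q.A, IsOCFCycle Q c}

section Dimensions

/-- `projDimLE R n M` : the `R`-module `M` admits a projective resolution of
length at most `n`. -/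
def projDimLE (R : Type) [Ring R] (n : ℕ) (M : Type) [AddCommGroup M] [Module R M] : Prop :=
  ∃ (P : ℕ → ModuleCat.{0} R) (d : ∀ i : ℕ, ↥(P (i + 1)) →ₗ[R] ↥(P i)) (ε : ↥(P 0) →ₗ[R] M),
    (∀ i, Module.Projective R ↥(P i)) ∧
    Function.Surjective ε ∧ Function.Exact (d 0) ε ∧
    (∀ i, Function.Exact (d (i + 1)) (d i)) ∧
    (∀ i, n ≤ i → Subsingleton ↥(P (i + 1)))

/-- `injDimLE R n M` : the `R`-module `M` admits an injective coresolution of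
length at most `n`. -/
def injDimLE (R : Type) [Ring R] (n : ℕ) (M : Type) [AddCommGroup M] [Module R M] : Prop :=
  ∃ (E : ℕ → ModuleCat.{0} R) (d : ∀ i : ℕ, ↥(E i) →ₗ[R] ↥(E (i + 1))) (ι : M →ₗ[R] ↥(E 0)),
    (∀ i, Module.Injective R ↥(E i)) ∧
    Function.Injective ι ∧ Function.Exact ι (d 0) ∧
    (∀ i, Function.Exact (d i) (d (i + 1))) ∧
    (∀ i, n ≤ i → Subsingleton ↥(E (i + 1)))

/-- The projective dimension of a module, in `ℕ∞`. -/
noncomputable def projDim (R : Type) [Ring R] (M : Type) [AddCommGroup M] [Module R M] : ℕ∞ :=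
  sInf {n : ℕ∞ | ∃ m : ℕ, n = (m : ℕ∞) ∧ projDimLE R m M}

/-- The injective dimension of a module, in `ℕ∞`. -/
noncomputable def injDim (R : Type) [Ring R] (M : Type) [AddCommGroup M] [Module R M] : ℕ∞ :=
  sInf {n : ℕ∞ | ∃ m : ℕ, n = (m : ℕ∞) ∧ injDimLE R m M}

/-- The global dimension of a ring: the supremum of the projective dimensions
of all finitely generated modules. -/
noncomputable def globalDim (R : Type) [Ring R] : ℕ∞ :=
  ⨆ (M : ModuleCat.{0} R) (_ : Module.Finite R ↥M), projDim R ↥M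

/-- The left self-injective dimension: the injective dimension of `R` as a
left module over itself. -/
noncomputable def leftSelfInjDim (R : Type) [Ring R] : ℕ∞ := injDim R R

/-- The right self-injective dimension: the injective dimension of `R` as a
right module over itself. -/
noncomputable def rightSelfInjDim (R : Type) [Ring R] : ℕ∞ := injDim Rᵐᵒᵖ R

end Dimensions

section Radical

/-- The radical of a module: the intersection of its maximal submodules. -/
def radMod (R : Type) [Ring R] (M : Type) [AddCommGroup M] [Module R M] : Submodule R M :=
  sInf {N : Submodule R M | IsCoatom N}

/-- The top of a module: the quotient by its radical. -/
abbrev topMod (R : Type) [Ring R] (M : Type) [AddCommGroup M] [Module R M] : Type :=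
  M ⧸ radMod R M

/-- The socle of a module: the sum of its simple submodules. -/
def socMod (R : Type) [Ring R] (M : Type) [AddCommGroup M] [Module R M] : Submodule R M :=
  sSup {N : Submodule R M | IsAtom N}

/-- The simple right `A`-module `S(v)` at a vertex `v`, realized as the top of
the indecomposable projective `e_v A`. -/
noncomputable abbrev SimpleAt (k : Type) [Field k] (Q : GentleData) (v : Q.V) : Type :=
  topMod (GentleAlgebra k Q)ᵐᵒᵖ ↥(vertexModule k Q v)

end Radical

section Gorenstein

/-- An indecomposable module: nontrivial, and admitting no nontrivial direct
sum decomposition. -/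
def IndecomposableModule (R : Type) [Ring R] (M : Type) [AddCommGroup M] [Module R M] : Prop :=
  Nontrivial M ∧ ∀ N N' : Submodule R M, IsCompl N N' → N = ⊥ ∨ N' = ⊥

/-- A Gorenstein projective module: a syzygy of an acyclic complex of
projective modules which remains acyclic after applying `Hom(−, R)`. -/
def IsGorensteinProjective (R : Type) [Ring R] (G : Type) [AddCommGroup G] [Module R G] :
    Prop :=
  ∃ (P : ℤ → ModuleCat.{0} R) (d : ∀ n : ℤ, ↥(P n) →ₗ[R] ↥(P (n + 1))),
    (∀ n, Module.Projective R ↥(P n)) ∧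
    (∀ n, Function.Exact (d n) (d (n + 1))) ∧
    (∀ n : ℤ, Function.Exact
      (fun g : ↥(P (n + 1 + 1)) →ₗ[R] R => g ∘ₗ d (n + 1))
      (fun g : ↥(P (n + 1)) →ₗ[R] R => g ∘ₗ d n)) ∧
    Nonempty (G ≃ₗ[R] ↥(LinearMap.range (d (-1))))

/-- An indecomposable non-projective Gorenstein projective module. -/
def IsIndecNonProjGP (R : Type) [Ring R] (M : Type) [AddCommGroup M] [Module R M] : Prop :=
  IndecomposableModule R M ∧ IsGorensteinProjective R M ∧ ¬ Module.Projective R M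

/-- An indecomposable Gorenstein projective module. -/
def IsIndecGP (R : Type) [Ring R] (M : Type) [AddCommGroup M] [Module R M] : Prop :=
  IndecomposableModule R M ∧ IsGorensteinProjective R M

/-- Indecomposable non-projective Gorenstein projective right `A`-modules
(realized as right submodules of `A`), up to isomorphism. -/
noncomputable def npgpSetoid (k : Type) [Field k] (Q : GentleData) :
    Setoid {N : Submodule (GentleAlgebra k Q)ᵐᵒᵖ (GentleAlgebra k Q) //
      IsIndecNonProjGP (GentleAlgebra k Q)ᵐᵒᵖ ↥N} where
  r N N' := Nonempty (↥N.1 ≃ₗ[(GentleAlgebra k Q)ᵐᵒᵖ] ↥N'.1)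
  iseqv := ⟨fun _ => ⟨LinearEquiv.refl _ _⟩, fun ⟨e⟩ => ⟨e.symm⟩, fun ⟨e⟩ ⟨f⟩ => ⟨e.trans f⟩⟩

/-- The number of isomorphism classes of indecomposable non-projective
Gorenstein projective right `A`-modules. -/
noncomputable def numIndecNonProjGP (k : Type) [Field k] (Q : GentleData) : ℕ :=
  Nat.card (Quotient (npgpSetoid k Q))

/-- Indecomposable Gorenstein projective right `A`-modules (realized as right
submodules of `A`), up to isomorphism. -/
noncomputable def gpSetoid (k : Type) [Field k] (Q : GentleData) :
    Setoid {N : Submodule (GentleAlgebra k Q)ᵐᵒᵖ (GentleAlgebra k Q) //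
      IsIndecGP (GentleAlgebra k Q)ᵐᵒᵖ ↥N} where
  r N N' := Nonempty (↥N.1 ≃ₗ[(GentleAlgebra k Q)ᵐᵒᵖ] ↥N'.1)
  iseqv := ⟨fun _ => ⟨LinearEquiv.refl _ _⟩, fun ⟨e⟩ => ⟨e.symm⟩, fun ⟨e⟩ ⟨f⟩ => ⟨e.trans f⟩⟩

end Gorenstein

section Strings

/-- A walk in the quiver: `len` letters, the `i`-th letter (for `1 ≤ i ≤ len`)
joining the vertex `vtx (i-1)` to `vtx i`; a letter `(a, true)` is the arrow
`a` read forwards (direct), and `(a, false)` is its formal inverse. -/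
structure StrWalk (Q : GentleData) : Type where
  len : ℕ
  vtx : ℕ → Q.V
  letter : ℕ → Q.A × Bool

/-- The walk is a string: letters join consecutive vertices, the walk is
reduced (no `a a⁻` nor `a⁻ a`), and it avoids the relations. -/
def IsString (Q : GentleData) (w : StrWalk Q) : Prop :=
  (∀ i : ℕ, 1 ≤ i → i ≤ w.len →
    ((w.letter i).2 = true →
      Q.src (w.letter i).1 = w.vtx (i - 1) ∧ Q.tgt (w.letter i).1 = w.vtx i) ∧
    ((w.letter i).2 = false →
      Q.tgt (w.letter i).1 = w.vtx (i - 1) ∧ Q.src (w.letter i).1 = w.vtx i)) ∧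
  (∀ i : ℕ, 1 ≤ i → i + 1 ≤ w.len →
    (¬ ((w.letter i).1 = (w.letter (i + 1)).1 ∧ (w.letter i).2 ≠ (w.letter (i + 1)).2)) ∧
    ((w.letter i).2 = true → (w.letter (i + 1)).2 = true →
      ¬ Q.rel (w.letter i).1 (w.letter (i + 1)).1) ∧
    ((w.letter i).2 = false → (w.letter (i + 1)).2 = false →
      ¬ Q.rel (w.letter (i + 1)).1 (w.letter i).1))

/-- `M` is the string module `M(w)` of the string `w`: it has a `k`-basis
indexed by the vertices `0, …, len` of the walk, the idempotent of a vertex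
fixes exactly the basis vectors sitting at that vertex, and an arrow moves
basis vectors along the corresponding letters of the walk. -/
def IsStringModule (k : Type) [Field k] (Q : GentleData) (w : StrWalk Q) (M : Type)
    [AddCommGroup M] [Module k M] [Module (GentleAlgebra k Q)ᵐᵒᵖ M] : Prop :=
  (∀ (c : k) (m : M), (algebraMap k (GentleAlgebra k Q)ᵐᵒᵖ c) • m = c • m) ∧
  ∃ b : ℕ → M,
    LinearIndependent k (fun i : Fin (w.len + 1) => b i) ∧
    Submodule.span k (b '' {i : ℕ | i ≤ w.len}) = ⊤ ∧
    (∀ i : ℕ, i ≤ w.len → ∀ v : Q.V,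
      (op (idemOf k Q v)) • b i = if w.vtx i = v then b i else 0) ∧
    (∀ i : ℕ, i ≤ w.len → ∀ a : Q.A,
      (op (arrOf k Q a)) • b i =
        (if i + 1 ≤ w.len ∧ w.letter (i + 1) = (a, true) then b (i + 1) else 0) +
        (if 1 ≤ i ∧ w.letter i = (a, false) then b (i - 1) else 0))

/-- The vertex at position `i` is a source of the walk: the adjacent letters
point away from it. -/
def sourceAt (Q : GentleData) (w : StrWalk Q) (i : ℕ) : Prop :=
  i ≤ w.len ∧ (i = 0 ∨ (w.letter i).2 = false) ∧ (i = w.len ∨ (w.letter (i + 1)).2 = true)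

/-- The vertex at position `i` is a sink of the walk: the adjacent letters
point towards it. -/
def sinkAt (Q : GentleData) (w : StrWalk Q) (i : ℕ) : Prop :=
  i ≤ w.len ∧ (i = 0 ∨ (w.letter i).2 = true) ∧ (i = w.len ∨ (w.letter (i + 1)).2 = false)

/-- Left maximality of the inverse prefix (letters `1, …, i`) of a walk of the
shape "inverse prefix followed by direct suffix": the underlying direct path
out of the vertex at position `i` cannot be prolonged (and, when the prefix is
trivial, no second arrow leaves the starting vertex). -/
def LeftMaxAt (Q : GentleData) (w : StrWalk Q) (i : ℕ) : Prop :=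
  if 1 ≤ i then ∀ α : Q.A, Q.src α = w.vtx 0 → Q.rel (w.letter 1).1 α
  else ∀ α : Q.A, Q.src α = w.vtx 0 → (1 ≤ w.len ∧ α = (w.letter 1).1)

/-- Right maximality of the direct suffix (letters `i+1, …, len`) of a walk of
the shape "inverse prefix followed by direct suffix". -/
def RightMaxAt (Q : GentleData) (w : StrWalk Q) (i : ℕ) : Prop :=
  if i < w.len then ∀ β : Q.A, Q.src β = w.vtx w.len → Q.rel (w.letter w.len).1 β
  else ∀ β : Q.A, Q.src β = w.vtx w.len → (1 ≤ w.len ∧ β = (w.letter w.len).1)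

end Strings

/-!
For a path algebra with quadratic monomial relations, left multiplication by an arrow `a` from
`e_{t(a)} A` onto `a A` has as kernel the direct sum of the `b A` over the arrows `b` with
`a b ∈ I`. Dimension shifting therefore shows that `pd (a A) ≥ n` exactly when a forbidden path of
`n + 1` arrows starts at `a`. The simple module at `v` has the direct sum of the `a A` with
`s(a) = v` as its first syzygy, and finitely generated modules have finite length, so the global
dimension is finite if and only if the lengths of the forbidden paths are bounded. In a finite
quiver this happens precisely when there is no oriented cycle with full relations, and that is read
off the values `φ_A(0, ℓ)` with `ℓ ≥ 1`.
-/

section ProjectiveDimension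

open CategoryTheory

universe u

/-- The `R`-module `M` has projective dimension less than `n`. -/
def HasProjDimLT (R : Type u) [Ring R] (M : Type u) [AddCommGroup M] [Module R M] (n : ℕ) :
    Prop :=
  HasProjectiveDimensionLT (ModuleCat.of R M) n

namespace HasProjDimLT

section Basic

variable {R : Type u} [Ring R] {M N : Type u} [AddCommGroup M] [Module R M]
  [AddCommGroup N] [Module R N] {m n : ℕ}

theorem mono (hmn : m ≤ n) (h : HasProjDimLT R M m) : HasProjDimLT R M n :=
  have : HasProjectiveDimensionLT (ModuleCat.of R M) m := h
  hasProjectiveDimensionLT_of_ge _ m n hmn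

theorem of_linearEquiv (e : M ≃ₗ[R] N) (h : HasProjDimLT R M n) : HasProjDimLT R N n :=
  have : HasProjectiveDimensionLT (ModuleCat.of R M) n := h
  hasProjectiveDimensionLT_of_iso e.toModuleIso n

theorem congr (e : M ≃ₗ[R] N) : HasProjDimLT R M n ↔ HasProjDimLT R N n :=
  ⟨of_linearEquiv e, of_linearEquiv e.symm⟩

theorem of_retract {i : M →ₗ[R] N} {r : N →ₗ[R] M} (hri : r ∘ₗ i = LinearMap.id)
    (h : HasProjDimLT R N n) : HasProjDimLT R M n :=
  have : HasProjectiveDimensionLT (ModuleCat.of R N) n := h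
  Retract.hasProjectiveDimensionLT
    { i := ModuleCat.ofHom i, r := ModuleCat.ofHom r, retract := ModuleCat.hom_ext hri } n

theorem zero_iff_subsingleton : HasProjDimLT R M 0 ↔ Subsingleton M :=
  (hasProjectiveDimensionLT_zero_iff_isZero _).trans ModuleCat.isZero_iff_subsingleton

theorem one_iff_projective : HasProjDimLT R M 1 ↔ Module.Projective R M :=
  projective_iff_hasProjectiveDimensionLT_one.symm.trans
    (IsProjective.iff_projective M).symm

theorem of_ker_of_surjective (g : M →ₗ[R] N) (hg : Function.Surjective g)
    (hker : HasProjDimLT R (LinearMap.ker g) n) (hN : HasProjDimLT R N n) : HasProjDimLT R M n :=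
  (LinearMap.shortExact_shortComplexKer hg).hasProjectiveDimensionLT_X₂ n hker hN

theorem succ_of_ker [hM : Module.Projective R M] (g : M →ₗ[R] N) (hg : Function.Surjective g)
    (hker : HasProjDimLT R (LinearMap.ker g) n) : HasProjDimLT R N (n + 1) :=
  (LinearMap.shortExact_shortComplexKer hg).hasProjectiveDimensionLT_X₃ n hker
    ((one_iff_projective.2 hM).mono (Nat.le_add_left 1 n))

theorem add_two_iff_ker [hM : Module.Projective R M] (g : M →ₗ[R] N)
    (hg : Function.Surjective g) :
    HasProjDimLT R N (n + 2) ↔ HasProjDimLT R (LinearMap.ker g) (n + 1) :=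
  (LinearMap.shortExact_shortComplexKer hg).hasProjectiveDimensionLT_X₃_iff n
    ((IsProjective.iff_projective M).1 hM)

theorem prod_iff : HasProjDimLT R (M × N) n ↔ HasProjDimLT R M n ∧ HasProjDimLT R N n := by
  refine ⟨fun h ↦ ⟨h.of_retract (LinearMap.fst_comp_inl R M N),
    h.of_retract (LinearMap.snd_comp_inr R M N)⟩, fun ⟨hM, hN⟩ ↦ ?_⟩
  refine of_ker_of_surjective (LinearMap.snd R M N) LinearMap.snd_surjective ?_ hN
  rw [LinearMap.ker_snd]
  exact hM.of_linearEquiv (LinearEquiv.ofInjective _ LinearMap.inl_injective)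

theorem sup_iff_of_disjoint {P Q : Submodule R M} (hPQ : Disjoint P Q) :
    HasProjDimLT R ↥(P ⊔ Q) n ↔ HasProjDimLT R P n ∧ HasProjDimLT R Q n := by
  have hinj : Function.Injective (P.subtype.coprod Q.subtype) := by
    rw [← LinearMap.ker_eq_bot, LinearMap.ker_coprod_of_disjoint_range _ _ (by simpa using hPQ)]
    simp only [Submodule.ker_subtype, Submodule.prod_bot]
  rw [Submodule.sup_eq_range, ← prod_iff]
  exact (congr (LinearEquiv.ofInjective _ hinj)).symm

theorem finset_sup_iff_of_supIndep {ι : Type*} {s : Finset ι} {p : ι → Submodule R M}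
    (hp : s.SupIndep p) : HasProjDimLT R ↥(s.sup p) n ↔ ∀ i ∈ s, HasProjDimLT R (p i) n := by
  classical
  induction s using Finset.induction_on with
  | empty =>
    rw [Finset.sup_empty]
    simpa using (zero_iff_subsingleton.2 inferInstance).mono (Nat.zero_le n)
  | insert i s his ih =>
    have hdisj : Disjoint (p i) (s.sup p) := hp (Finset.subset_insert i s)
      (Finset.mem_insert_self i s) his
    rw [Finset.sup_insert, sup_iff_of_disjoint hdisj, ih (hp.subset (Finset.subset_insert i s)),
      Finset.forall_mem_insert]

section SubmoduleMap

variable {f : M →ₗ[R] N} {P : Submodule R M}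

theorem kerSubmoduleMap_iff :
    HasProjDimLT R (LinearMap.ker (f.submoduleMap P)) n ↔
      HasProjDimLT R ↥(P ⊓ LinearMap.ker f) n := by
  have hker : LinearMap.ker (f.submoduleMap P) = (LinearMap.ker f).submoduleOf P :=
    LinearMap.ker_restrict _
  rw [hker, congr (Submodule.equivSubtypeMap P _), Submodule.submoduleOf,
    Submodule.map_comap_subtype]

theorem succ_map_of_inf_ker [Module.Projective R P]
    (h : HasProjDimLT R ↥(P ⊓ LinearMap.ker f) n) : HasProjDimLT R (P.map f) (n + 1) :=
  succ_of_ker _ (f.submoduleMap_surjective P) (kerSubmoduleMap_iff.2 h)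

theorem add_two_map_iff_inf_ker [Module.Projective R P] :
    HasProjDimLT R (P.map f) (n + 2) ↔ HasProjDimLT R ↥(P ⊓ LinearMap.ker f) (n + 1) :=
  (add_two_iff_ker _ (f.submoduleMap_surjective P)).trans kerSubmoduleMap_iff

end SubmoduleMap

end Basic

section FiniteLength

variable {R : Type u} [Ring R] {M : Type u} [AddCommGroup M] [Module R M] {n : ℕ}

theorem of_isFiniteLength (hM : IsFiniteLength R M)
    (hsimple : ∀ (S : Type u) [AddCommGroup S] [Module R S], IsSimpleModule R S →
      HasProjDimLT R S n) : HasProjDimLT R M n := by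
  induction hM with
  | of_subsingleton => exact (zero_iff_subsingleton.2 inferInstance).mono (Nat.zero_le n)
  | @of_simple_quotient M _ _ N hN _ ih =>
    refine of_ker_of_surjective N.mkQ N.mkQ_surjective ?_ (hsimple _ hN)
    rwa [Submodule.ker_mkQ]

end FiniteLength

end HasProjDimLT

section Resolution

variable {R : Type} [Ring R] {M : Type} [AddCommGroup M] [Module R M] {n : ℕ}

theorem projDimLE_zero_iff : projDimLE R 0 M ↔ Module.Projective R M := by
  constructor
  · rintro ⟨P, d, ε, hP, hε, hdε, -, hzero⟩
    have := hP 0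
    have := hzero 0 le_rfl
    have hinj : Function.Injective ε := by
      rwa [← LinearMap.exact_zero_iff_injective (P (0 + 1)) ε, ← Subsingleton.elim (d 0) 0]
    exact Module.Projective.of_equiv (LinearEquiv.ofBijective ε ⟨hinj, hε⟩)
  · intro hM
    let P : ℕ → ModuleCat.{0} R
      | 0 => ModuleCat.of R M
      | _ + 1 => ModuleCat.of R PUnit
    have hzero (i : ℕ) : Subsingleton (P (i + 1)) := inferInstanceAs (Subsingleton PUnit)
    refine ⟨P, fun _ ↦ 0, LinearMap.id, ?_, Function.surjective_id, ?_, ?_, fun i _ ↦ hzero i⟩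
    · rintro (_ | i)
      · exact hM
      · exact inferInstanceAs (Module.Projective R PUnit)
    · exact (LinearMap.exact_zero_iff_injective _ _).2 Function.injective_id
    · exact fun i x ↦ iff_of_true rfl ⟨0, Subsingleton.elim _ _⟩

theorem projDimLE_succ_of_ker {F : Type} [AddCommGroup F] [Module R F] [hF : Module.Projective R F]
    (g : F →ₗ[R] M) (hg : Function.Surjective g) (hker : projDimLE R n (LinearMap.ker g)) :
    projDimLE R (n + 1) M := by
  obtain ⟨P, d, ε, hP, hε, hdε, hd, hzero⟩ := hker
  let P' : ℕ → ModuleCat.{0} R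
    | 0 => ModuleCat.of R F
    | i + 1 => P i
  let d' : ∀ i : ℕ, ↥(P' (i + 1)) →ₗ[R] ↥(P' i)
    | 0 => (LinearMap.ker g).subtype ∘ₗ ε
    | i + 1 => d i
  refine ⟨P', d', g, ?_, hg, ?_, ?_, ?_⟩
  · exact Nat.rec hF fun i _ ↦ hP i
  · rw [LinearMap.exact_iff]
    exact ((LinearMap.range_comp_of_range_eq_top _ (LinearMap.range_eq_top.2 hε)).trans
      (Submodule.range_subtype _)).symm
  · rintro (_ | i)
    · exact fun x ↦ Subtype.ext_iff.symm.trans (hdε x)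
    · exact hd i
  · rintro (_ | i) hi
    · exact absurd hi (Nat.not_succ_le_zero n)
    · exact hzero i (Nat.le_of_succ_le_succ hi)

theorem exists_projective_ker_of_projDimLE_succ (h : projDimLE R (n + 1) M) :
    ∃ (F : ModuleCat.{0} R) (g : F →ₗ[R] M),
      Module.Projective R F ∧ Function.Surjective g ∧ projDimLE R n (LinearMap.ker g) := by
  obtain ⟨P, d, ε, hP, hε, hdε, hd, hzero⟩ := h
  refine ⟨P 0, ε, hP 0, hε, fun i ↦ P (i + 1), fun i ↦ d (i + 1),
    (d 0).codRestrict _ hdε.apply_apply_eq_zero, fun i ↦ hP (i + 1), ?_, ?_,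
    fun i ↦ hd (i + 1), fun i hi ↦ hzero (i + 1) (Nat.succ_le_succ hi)⟩
  · rintro ⟨x, hx⟩
    obtain ⟨y, rfl⟩ := (hdε x).1 hx
    exact ⟨y, rfl⟩
  · exact fun x ↦ Subtype.ext_iff.trans (hd 0 x)

theorem projDimLE_iff_hasProjDimLT : projDimLE R n M ↔ HasProjDimLT R M (n + 1) := by
  induction n generalizing M with
  | zero => exact projDimLE_zero_iff.trans HasProjDimLT.one_iff_projective.symm
  | succ n ih =>
    constructor
    · intro h
      obtain ⟨F, g, hF, hg, hker⟩ := exists_projective_ker_of_projDimLE_succ h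
      exact HasProjDimLT.succ_of_ker g hg (ih.1 hker)
    · intro h
      have hg := Finsupp.linearCombination_id_surjective R M
      exact projDimLE_succ_of_ker _ hg (ih.2 ((HasProjDimLT.add_two_iff_ker _ hg).1 h))

theorem projDim_le_natCast_iff : projDim R M ≤ n ↔ HasProjDimLT R M (n + 1) := by
  constructor
  · intro h
    obtain ⟨_, ⟨m, rfl, hm⟩, hmn⟩ :=
      sInf_lt_iff.1 (h.trans_lt (ENat.natCast_lt_natCast.2 n.lt_succ_self))
    exact (projDimLE_iff_hasProjDimLT.1 hm).mono (ENat.natCast_lt_natCast.1 hmn)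
  · exact fun h ↦ sInf_le ⟨n, rfl, projDimLE_iff_hasProjDimLT.2 h⟩

variable (R) in
theorem globalDim_lt_top_iff_exists_hasProjDimLT : globalDim R < ⊤ ↔
    ∃ n : ℕ, ∀ (M : Type) [AddCommGroup M] [Module R M], Module.Finite R M →
      HasProjDimLT R M (n + 1) := by
  have hle (n : ℕ) : globalDim R ≤ n ↔ ∀ (M : Type) [AddCommGroup M] [Module R M],
      Module.Finite R M → HasProjDimLT R M (n + 1) := by
    simp only [globalDim, iSup_le_iff, projDim_le_natCast_iff]
    exact ⟨fun h M _ _ hM ↦ h (ModuleCat.of R M) hM, fun h M hM ↦ h M hM⟩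
  simp only [← hle]
  exact ⟨fun h ↦ ⟨_, (ENat.natCast_toNat h.ne).ge⟩,
    fun ⟨n, hn⟩ ↦ hn.trans_lt (ENat.natCast_lt_top n)⟩

end Resolution

end ProjectiveDimension

section PrincipalRightIdeals

universe u

variable {A : Type u} [Ring A] {e y : A}

theorem mem_span_op_singleton {x : A} : x ∈ Submodule.span Aᵐᵒᵖ {y} ↔ ∃ z, y * z = x := by
  rw [Submodule.mem_span_singleton, MulOpposite.op_surjective.exists]
  rfl

theorem mul_mem_span_op_singleton (y z : A) : y * z ∈ Submodule.span Aᵐᵒᵖ {y} :=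
  mem_span_op_singleton.2 ⟨z, rfl⟩

theorem mem_finset_sup_span_op_singleton {ι : Type*} {s : Finset ι} {f : ι → A} {x : A} :
    x ∈ s.sup (fun i ↦ Submodule.span Aᵐᵒᵖ {f i}) ↔ ∃ z : ι → A, ∑ i ∈ s, f i * z i = x := by
  rw [Finset.sup_eq_iSup, Submodule.mem_iSup_finset_iff_exists_sum]
  refine ⟨fun ⟨m, hm⟩ ↦ ?_, fun ⟨z, hz⟩ ↦ ⟨fun i ↦ ⟨_, mul_mem_span_op_singleton _ (z i)⟩, hz⟩⟩
  choose z hz using fun i ↦ mem_span_op_singleton.1 (m i).2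
  exact ⟨z, by simpa only [hz] using hm⟩

theorem mem_span_op_singleton_iff_of_isIdempotentElem (he : IsIdempotentElem e) {x : A} :
    x ∈ Submodule.span Aᵐᵒᵖ {e} ↔ e * x = x :=
  mem_span_op_singleton.trans
    ⟨fun ⟨z, hz⟩ ↦ by rw [← hz, ← mul_assoc, he.eq], fun h ↦ ⟨x, h⟩⟩

theorem projective_op_self (A : Type u) [Ring A] : Module.Projective Aᵐᵒᵖ A :=
  Module.Projective.of_equiv (MulOpposite.opLinearEquiv Aᵐᵒᵖ : A ≃ₗ[Aᵐᵒᵖ] Aᵐᵒᵖ).symm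

theorem projective_span_op_singleton_of_isIdempotentElem (he : IsIdempotentElem e) :
    Module.Projective Aᵐᵒᵖ (Submodule.span Aᵐᵒᵖ {e}) :=
  have := projective_op_self A
  Module.Projective.of_split (Submodule.subtype _)
    ((LinearMap.mulLeft Aᵐᵒᵖ e).codRestrict _ (mul_mem_span_op_singleton e))
    (LinearMap.ext fun x ↦ Subtype.ext ((mem_span_op_singleton_iff_of_isIdempotentElem he).1 x.2))

theorem map_mulLeft_span_op_singleton (hye : y * e = y) :
    (Submodule.span Aᵐᵒᵖ {e}).map (LinearMap.mulLeft Aᵐᵒᵖ y) = Submodule.span Aᵐᵒᵖ {y} := by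
  rw [Submodule.map_span, Set.image_singleton, LinearMap.mulLeft_apply, hye]

-- The projection onto the annihilator of `y` in `eA` along a splitting of `eA → yA` is left
-- multiplication by an element.
theorem exists_mul_eq_self_of_projective_span_op_singleton (he : IsIdempotentElem e)
    (hye : y * e = y) (hproj : Module.Projective Aᵐᵒᵖ (Submodule.span Aᵐᵒᵖ {y})) :
    ∃ z, e * z = z ∧ y * z = 0 ∧ ∀ b, e * b = b → y * b = 0 → z * b = b := by
  let g : A →ₗ[Aᵐᵒᵖ] Submodule.span Aᵐᵒᵖ {y} :=
    (LinearMap.mulLeft Aᵐᵒᵖ y).codRestrict _ (mul_mem_span_op_singleton y)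
  have hg : Function.Surjective g := fun ⟨x, hx⟩ ↦
    let ⟨z, hz⟩ := mem_span_op_singleton.1 hx
    ⟨z, Subtype.ext hz⟩
  obtain ⟨s, hs⟩ := Module.projective_lifting_property g LinearMap.id hg
  let y' : Submodule.span Aᵐᵒᵖ {y} := ⟨y, Submodule.mem_span_singleton_self y⟩
  have hys : y * s y' = y := congrArg Subtype.val (LinearMap.congr_fun hs y')
  have hsb (b : A) (hyb : y * b = 0) : s y' * b = 0 := by
    rw [← op_smul_eq_mul, ← map_smul, ← map_zero s]
    exact congrArg s (Subtype.ext hyb)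
  refine ⟨e - e * s y', ?_, ?_, fun b heb hyb ↦ ?_⟩
  · rw [mul_sub, ← mul_assoc, he.eq]
  · rw [mul_sub, ← mul_assoc, hye, hys, sub_self]
  · rw [sub_mul, mul_assoc, hsb b hyb, heb, mul_zero, sub_zero]

/-- The map `x ↦ m x` from the ring `A` to a right `A`-module, given as an `Aᵐᵒᵖ`-module. -/
def orbitMap {S : Type*} [AddCommGroup S] [Module Aᵐᵒᵖ S] (m : S) : A →ₗ[Aᵐᵒᵖ] S :=
  LinearMap.toSpanSingleton Aᵐᵒᵖ S m ∘ₗ (MulOpposite.opLinearEquiv Aᵐᵒᵖ).toLinearMap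

theorem HasProjDimLT.succ_of_isSimpleModule_of_inf_ker_orbitMap (he : IsIdempotentElem e)
    {S : Type u} [AddCommGroup S] [Module Aᵐᵒᵖ S] [IsSimpleModule Aᵐᵒᵖ S] {m : S}
    (hm : m ≠ 0) (hme : op e • m = m) {n : ℕ}
    (h : HasProjDimLT Aᵐᵒᵖ ↥(Submodule.span Aᵐᵒᵖ {e} ⊓ LinearMap.ker (orbitMap m)) n) :
    HasProjDimLT Aᵐᵒᵖ S (n + 1) := by
  have := projective_span_op_singleton_of_isIdempotentElem he
  have hmem : m ∈ (Submodule.span Aᵐᵒᵖ {e}).map (orbitMap m) :=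
    ⟨e, Submodule.mem_span_singleton_self e, hme⟩
  have htop : (Submodule.span Aᵐᵒᵖ {e}).map (orbitMap m) = ⊤ :=
    (eq_bot_or_eq_top _).resolve_left fun hbot ↦ hm (by rwa [hbot, Submodule.mem_bot] at hmem)
  have hmap := HasProjDimLT.succ_map_of_inf_ker h
  rw [htop] at hmap
  exact hmap.of_linearEquiv Submodule.topEquiv

end PrincipalRightIdeals

section PartialMap

universe u v

variable {k : Type u} {X : Type v} [Field k] {P P' : X → Prop} {g g' : X → X}

open scoped Classical in
variable (k P g) in
/-- The endomorphism of the vector space with basis `X` that sends a basis element `x` to `g x`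
when `P x` holds, and to `0` otherwise. -/
noncomputable def partialMap : Module.End k (X →₀ k) :=
  Finsupp.linearCombination k fun x ↦ if P x then Finsupp.single (g x) 1 else 0

theorem partialMap_single_of_pos {x : X} (hx : P x) (c : k) :
    partialMap k P g (Finsupp.single x c) = Finsupp.single (g x) c := by
  simp [partialMap, hx]

theorem partialMap_single_of_neg {x : X} (hx : ¬ P x) (c : k) :
    partialMap k P g (Finsupp.single x c) = 0 := by
  simp [partialMap, hx]

theorem partialMap_eq_zero (h : ∀ x, ¬ P x) : partialMap k P g = 0 :=
  Finsupp.lhom_ext fun x _ ↦ partialMap_single_of_neg (h x) _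

theorem partialMap_mul_partialMap : partialMap k P g * partialMap k P' g' =
    partialMap k (fun x ↦ P' x ∧ P (g' x)) (g ∘ g') := by
  refine Finsupp.lhom_ext fun x c ↦ ?_
  rw [Module.End.mul_apply]
  by_cases h' : P' x
  · rw [partialMap_single_of_pos h']
    by_cases h : P (g' x)
    · rw [partialMap_single_of_pos h, partialMap_single_of_pos ⟨h', h⟩]
      rfl
    · rw [partialMap_single_of_neg h, partialMap_single_of_neg fun hx ↦ h hx.2]
  · rw [partialMap_single_of_neg h', partialMap_single_of_neg fun hx ↦ h' hx.1, map_zero]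

theorem sum_partialMap_fiber {V : Type*} [Fintype V] (s : X → V) :
    ∑ v, partialMap k (fun x ↦ s x = v) id = 1 := by
  refine Finsupp.lhom_ext fun x c ↦ ?_
  rw [LinearMap.sum_apply]
  refine (Fintype.sum_eq_single (s x) fun v hv ↦ ?_).trans ?_
  · exact partialMap_single_of_neg (fun h ↦ hv h.symm) c
  · exact partialMap_single_of_pos (P := fun y ↦ s y = s x) rfl c

theorem partialMap_mem_supported {s t : Set X} {f : X →₀ k} (hst : ∀ x ∈ s, P x → g x ∈ t)
    (hf : f ∈ Finsupp.supported k k s) : partialMap k P g f ∈ Finsupp.supported k k t := by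
  rw [partialMap, Finsupp.linearCombination_apply]
  refine Submodule.sum_mem _ fun x hx ↦ Submodule.smul_mem _ _ ?_
  split_ifs with h
  · exact Finsupp.single_mem_supported k 1 (hst x (hf hx) h)
  · exact zero_mem _

theorem partialMap_apply_of_injective (hg : Function.Injective g) (f : X →₀ k) {x : X}
    (hx : P x) : partialMap k P g f (g x) = f x := by
  induction f using Finsupp.induction_linear with
  | zero => simp only [map_zero, Finsupp.coe_zero, Pi.zero_apply]
  | add f₁ f₂ h₁ h₂ => rw [map_add, Finsupp.add_apply, Finsupp.add_apply, h₁, h₂]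
  | single y c =>
    by_cases hy : P y
    · rw [partialMap_single_of_pos hy, Finsupp.single_apply_left hg]
    · rw [partialMap_single_of_neg hy, Finsupp.single_eq_of_ne (by rintro rfl; exact hy hx)]
      rfl

theorem mem_supported_of_partialMap_eq_zero (hg : Function.Injective g) {f : X →₀ k}
    (hf : partialMap k P g f = 0) : f ∈ Finsupp.supported k k {x | ¬ P x} := by
  rw [Finsupp.mem_supported']
  intro x hx
  rw [← partialMap_apply_of_injective hg f (not_not.1 hx), hf, Finsupp.coe_zero, Pi.zero_apply]

end PartialMap

section Relations

variable {k : Type} [Field k] {Q : GentleData}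

theorem isIdempotentElem_idemOf (v : Q.V) : IsIdempotentElem (idemOf k Q v) :=
  (map_mul _ _ _).symm.trans (RingQuot.mkAlgHom_rel k (.idem v))

theorem idemOf_mul_idemOf_of_ne {v w : Q.V} (h : v ≠ w) : idemOf k Q v * idemOf k Q w = 0 :=
  (map_mul _ _ _).symm.trans ((RingQuot.mkAlgHom_rel k (.orth v w h)).trans (map_zero _))

theorem sum_idemOf : ∑ v, idemOf k Q v = 1 :=
  (map_sum _ _ _).symm.trans ((RingQuot.mkAlgHom_rel k .sum_idem).trans (map_one _))

theorem idemOf_src_mul_arrOf (a : Q.A) : idemOf k Q (Q.src a) * arrOf k Q a = arrOf k Q a :=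
  (map_mul _ _ _).symm.trans (RingQuot.mkAlgHom_rel k (.src_mul a))

theorem arrOf_mul_idemOf_tgt (a : Q.A) : arrOf k Q a * idemOf k Q (Q.tgt a) = arrOf k Q a :=
  (map_mul _ _ _).symm.trans (RingQuot.mkAlgHom_rel k (.mul_tgt a))

theorem arrOf_mul_arrOf_of_rel {a b : Q.A} (h : Q.rel a b) : arrOf k Q a * arrOf k Q b = 0 :=
  (map_mul _ _ _).symm.trans ((RingQuot.mkAlgHom_rel k (.relation a b h)).trans (map_zero _))

theorem idemOf_mul_arrOf_of_ne {v : Q.V} {a : Q.A} (h : v ≠ Q.src a) :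
    idemOf k Q v * arrOf k Q a = 0 := by
  rw [← idemOf_src_mul_arrOf, ← mul_assoc, idemOf_mul_idemOf_of_ne h, zero_mul]

theorem arrOf_mul_idemOf_of_ne {a : Q.A} {v : Q.V} (h : Q.tgt a ≠ v) :
    arrOf k Q a * idemOf k Q v = 0 := by
  rw [← arrOf_mul_idemOf_tgt, mul_assoc, idemOf_mul_idemOf_of_ne h, mul_zero]

theorem arrOf_mul_arrOf_eq_zero {a b : Q.A} (h : Q.tgt a = Q.src b → Q.rel a b) :
    arrOf k Q a * arrOf k Q b = 0 := by
  by_cases hab : Q.tgt a = Q.src b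
  · exact arrOf_mul_arrOf_of_rel (h hab)
  · rw [← idemOf_src_mul_arrOf b, ← mul_assoc, arrOf_mul_idemOf_of_ne hab, zero_mul]

@[elab_as_elim]
theorem gentleAlgebra_induction {p : GentleAlgebra k Q → Prop}
    (algebraMap : ∀ c : k, p (algebraMap k _ c)) (idemOf : ∀ v, p (idemOf k Q v))
    (arrOf : ∀ a, p (arrOf k Q a)) (add : ∀ x y, p x → p y → p (x + y))
    (mul : ∀ x y, p x → p y → p (x * y)) (x : GentleAlgebra k Q) : p x := by
  obtain ⟨y, rfl⟩ := RingQuot.mkAlgHom_surjective k (GentleRel k Q) x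
  induction y using FreeAlgebra.induction with
  | grade0 c => rw [AlgHom.commutes]; exact algebraMap c
  | grade1 g => cases g with
    | vertex v => exact idemOf v
    | arrow a => exact arrOf a
  | add y z hy hz => rw [map_add]; exact add _ _ hy hz
  | mul y z hy hz => rw [map_mul]; exact mul _ _ hy hz

end Relations

/-- Composable or not, a finite sequence of arrows followed by a vertex at which it is meant to
end. -/
inductive FormalPath (Q : GentleData) : Type
  | nil : Q.V → FormalPath Q
  | cons : Q.A → FormalPath Q → FormalPath Q

namespace FormalPath

variable {k : Type} [Field k] {Q : GentleData}

/-- The vertex at which a formal path starts. -/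
def start : FormalPath Q → Q.V
  | nil v => v
  | cons a _ => Q.src a

/-- The number of arrows of a formal path. -/
def length : FormalPath Q → ℕ
  | nil _ => 0
  | cons _ p => p.length + 1

/-- The arrow `a` composes with the formal path, and composing creates no relation. -/
def CanPrepend (a : Q.A) : FormalPath Q → Prop
  | nil v => Q.tgt a = v
  | cons b _ => Q.tgt a = Q.src b ∧ ¬ Q.rel a b

theorem CanPrepend.tgt_eq {a : Q.A} : ∀ {p : FormalPath Q}, CanPrepend a p → Q.tgt a = p.start
  | nil _, h => h
  | cons _ _, h => h.1

theorem cons_injective (a : Q.A) : Function.Injective (cons a) := fun _ _ h ↦ (cons.inj h).2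

variable (k) in
/-- The product in the algebra of the arrows and the last vertex of a formal path. -/
noncomputable def toAlgebra : FormalPath Q → GentleAlgebra k Q
  | nil v => idemOf k Q v
  | cons a p => arrOf k Q a * p.toAlgebra

theorem idemOf_start_mul_toAlgebra : ∀ p : FormalPath Q,
    idemOf k Q p.start * p.toAlgebra k = p.toAlgebra k
  | nil v => isIdempotentElem_idemOf v
  | cons a p => by rw [toAlgebra, start, ← mul_assoc, idemOf_src_mul_arrOf]

theorem idemOf_mul_toAlgebra_of_ne {v : Q.V} {p : FormalPath Q} (h : p.start ≠ v) :
    idemOf k Q v * p.toAlgebra k = 0 := by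
  rw [← idemOf_start_mul_toAlgebra, ← mul_assoc, idemOf_mul_idemOf_of_ne h.symm, zero_mul]

theorem arrOf_mul_toAlgebra_eq_zero {a : Q.A} : ∀ {p : FormalPath Q}, ¬ CanPrepend a p →
    arrOf k Q a * p.toAlgebra k = 0
  | nil _, h => arrOf_mul_idemOf_of_ne h
  | cons b p, h => by
    rw [toAlgebra, ← mul_assoc, arrOf_mul_arrOf_eq_zero fun hab ↦ not_not.1 fun hr ↦ h ⟨hab, hr⟩,
      zero_mul]

end FormalPath

section PathRepresentation

open FormalPath

variable {k : Type} [Field k] {Q : GentleData}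

variable (k Q) in
/-- The operator on the space of formal paths given by left multiplication by a generator. -/
noncomputable def generatorAction : GenSym Q → Module.End k (FormalPath Q →₀ k)
  | .vertex v => partialMap k (fun p ↦ p.start = v) id
  | .arrow a => partialMap k (CanPrepend a) (cons a)

theorem lift_generatorAction_eq_of_gentleRel {x y : FreeAlgebra k (GenSym Q)}
    (h : GentleRel k Q x y) : FreeAlgebra.lift k (generatorAction k Q) x =
      FreeAlgebra.lift k (generatorAction k Q) y := by
  induction h <;> simp only [map_mul, map_zero, map_one, map_sum, FreeAlgebra.lift_ι_apply,
    generatorAction, partialMap_mul_partialMap]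
  case idem v => simp only [id, and_self, Function.comp_id]
  case orth v w hvw => exact partialMap_eq_zero fun p hp ↦ hvw (hp.2.symm.trans hp.1)
  case sum_idem => exact sum_partialMap_fiber start
  case src_mul a => simp only [start, and_true, Function.id_comp]
  case mul_tgt a =>
    congr
    exact funext fun p ↦ propext ⟨And.right, fun hp ↦ ⟨hp.tgt_eq.symm, hp⟩⟩
  case relation a b hab => exact partialMap_eq_zero fun p hp ↦ hp.2.2 hab

variable (k Q) in
/-- The left module of the algebra whose basis consists of the formal paths. -/
noncomputable def pathRep : GentleAlgebra k Q →ₐ[k] Module.End k (FormalPath Q →₀ k) :=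
  RingQuot.liftAlgHom k
    ⟨FreeAlgebra.lift k (generatorAction k Q), fun _ _ ↦ lift_generatorAction_eq_of_gentleRel⟩

theorem pathRep_idemOf (v : Q.V) :
    pathRep k Q (idemOf k Q v) = partialMap k (fun p ↦ p.start = v) id := by
  simp only [pathRep, idemOf, ofGen, RingQuot.liftAlgHom_mkAlgHom_apply, FreeAlgebra.lift_ι_apply,
    generatorAction]

theorem pathRep_arrOf (a : Q.A) :
    pathRep k Q (arrOf k Q a) = partialMap k (CanPrepend a) (cons a) := by
  simp only [pathRep, arrOf, ofGen, RingQuot.liftAlgHom_mkAlgHom_apply, FreeAlgebra.lift_ι_apply,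
    generatorAction]

variable (k Q) in
/-- The linear map that evaluates combinations of formal paths in the algebra. -/
noncomputable def pathEval : (FormalPath Q →₀ k) →ₗ[k] GentleAlgebra k Q :=
  Finsupp.linearCombination k (toAlgebra k)

theorem pathEval_single (p : FormalPath Q) (c : k) :
    pathEval k Q (Finsupp.single p c) = c • p.toAlgebra k :=
  Finsupp.linearCombination_single k c p

theorem pathEval_partialMap {P : FormalPath Q → Prop} {g : FormalPath Q → FormalPath Q}
    {y : GentleAlgebra k Q} (hpos : ∀ p, P p → y * p.toAlgebra k = (g p).toAlgebra k)
    (hneg : ∀ p, ¬ P p → y * p.toAlgebra k = 0) (f : FormalPath Q →₀ k) :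
    pathEval k Q (partialMap k P g f) = y * pathEval k Q f := by
  induction f using Finsupp.induction_linear with
  | zero => rw [map_zero, map_zero, mul_zero]
  | add f₁ f₂ h₁ h₂ => rw [map_add, map_add, map_add, h₁, h₂, mul_add]
  | single p c =>
    rw [pathEval_single, mul_smul_comm]
    by_cases hp : P p
    · rw [partialMap_single_of_pos hp, pathEval_single, hpos p hp]
    · rw [partialMap_single_of_neg hp, map_zero, hneg p hp, smul_zero]

theorem pathEval_pathRep (x : GentleAlgebra k Q) (f : FormalPath Q →₀ k) :
    pathEval k Q (pathRep k Q x f) = x * pathEval k Q f := by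
  induction x using gentleAlgebra_induction generalizing f with
  | algebraMap c =>
    rw [AlgHom.commutes, Module.algebraMap_end_apply, map_smul, Algebra.smul_def]
  | idemOf v =>
    rw [pathRep_idemOf]
    exact pathEval_partialMap (fun p hp ↦ hp ▸ idemOf_start_mul_toAlgebra p)
      (fun _ ↦ idemOf_mul_toAlgebra_of_ne) f
  | arrOf a =>
    rw [pathRep_arrOf]
    exact pathEval_partialMap (fun _ _ ↦ rfl) (fun _ ↦ arrOf_mul_toAlgebra_eq_zero) f
  | add x y hx hy => rw [map_add, LinearMap.add_apply, map_add, hx, hy, add_mul]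
  | mul x y hx hy => rw [map_mul, Module.End.mul_apply, hx, hy, mul_assoc]

variable (k Q) in
/-- The coordinates of an element of the algebra with respect to the formal paths. -/
noncomputable def pathCoords : GentleAlgebra k Q →ₗ[k] FormalPath Q →₀ k :=
  LinearMap.applyₗ (∑ v, Finsupp.single (nil v) 1) ∘ₗ (pathRep k Q).toLinearMap

theorem pathCoords_mul (x y : GentleAlgebra k Q) :
    pathCoords k Q (x * y) = pathRep k Q x (pathCoords k Q y) :=
  LinearMap.congr_fun (map_mul (pathRep k Q) x y) _

theorem pathEval_pathCoords (x : GentleAlgebra k Q) : pathEval k Q (pathCoords k Q x) = x := by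
  refine (pathEval_pathRep x _).trans ?_
  simp only [map_sum, pathEval_single, one_smul, FormalPath.toAlgebra, sum_idemOf, mul_one]

theorem pathCoords_arrOf (a : Q.A) :
    pathCoords k Q (arrOf k Q a) = Finsupp.single (cons a (nil (Q.tgt a))) 1 := by
  change pathRep k Q (arrOf k Q a) _ = _
  rw [pathRep_arrOf, map_sum]
  refine (Fintype.sum_eq_single (Q.tgt a) fun v hv ↦ ?_).trans ?_
  · exact partialMap_single_of_neg (fun h ↦ hv h.symm) 1
  · exact partialMap_single_of_pos (show CanPrepend a (nil (Q.tgt a)) from rfl) 1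

theorem arrOf_ne_zero (a : Q.A) : arrOf k Q a ≠ 0 := fun h ↦ by
  have hcoords := pathCoords_arrOf (k := k) a
  rw [h, map_zero] at hcoords
  exact one_ne_zero (Finsupp.single_eq_zero.1 hcoords.symm)

theorem mem_of_pathCoords_mem_supported {N : Submodule k (GentleAlgebra k Q)}
    {s : Set (FormalPath Q)} (hs : ∀ p ∈ s, p.toAlgebra k ∈ N) {x : GentleAlgebra k Q}
    (hx : pathCoords k Q x ∈ Finsupp.supported k k s) : x ∈ N := by
  rw [← pathEval_pathCoords x, pathEval, Finsupp.linearCombination_apply]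
  exact N.sum_mem fun p hp ↦ N.smul_mem _ (hs p (hx hp))

theorem pathCoords_mem_supported_of_idemOf_mul {v : Q.V} {x : GentleAlgebra k Q}
    (hx : idemOf k Q v * x = x) :
    pathCoords k Q x ∈ Finsupp.supported k k {p | p.start = v} := by
  rw [← hx, pathCoords_mul, pathRep_idemOf]
  exact partialMap_mem_supported (s := Set.univ) (fun _ _ hp ↦ hp) fun _ _ ↦ trivial

theorem pathCoords_mem_supported_of_arrOf_mul_eq_zero {a : Q.A} {x : GentleAlgebra k Q}
    (hx : arrOf k Q a * x = 0) :
    pathCoords k Q x ∈ Finsupp.supported k k {p | ¬ CanPrepend a p} := by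
  refine mem_supported_of_partialMap_eq_zero (cons_injective a) ?_
  rw [← pathRep_arrOf, ← pathCoords_mul, hx, map_zero]

theorem pathRep_mem_supported_length (x : GentleAlgebra k Q) {n : ℕ} {f : FormalPath Q →₀ k}
    (hf : f ∈ Finsupp.supported k k {p | n ≤ p.length}) :
    pathRep k Q x f ∈ Finsupp.supported k k {p | n ≤ p.length} := by
  induction x using gentleAlgebra_induction generalizing f with
  | algebraMap c =>
    rw [AlgHom.commutes, Module.algebraMap_end_apply]
    exact Submodule.smul_mem _ c hf
  | idemOf v =>
    rw [pathRep_idemOf]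
    exact partialMap_mem_supported (fun _ hp _ ↦ hp) hf
  | arrOf a =>
    rw [pathRep_arrOf]
    exact partialMap_mem_supported (fun _ hp _ ↦ Nat.le_succ_of_le hp) hf
  | add x y hx hy =>
    rw [map_add]
    exact add_mem (hx hf) (hy hf)
  | mul x y hx hy =>
    rw [map_mul]
    exact hx (hy hf)

theorem pathRep_arrOf_mem_supported_length (a : Q.A) {n : ℕ} {f : FormalPath Q →₀ k}
    (hf : f ∈ Finsupp.supported k k {p | n ≤ p.length}) :
    pathRep k Q (arrOf k Q a) f ∈ Finsupp.supported k k {p | n + 1 ≤ p.length} := by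
  rw [pathRep_arrOf]
  exact partialMap_mem_supported (fun _ hp _ ↦ Nat.succ_le_succ hp) hf

end PathRepresentation

section ArrowModules

open FormalPath

variable {k : Type} [Field k] {Q : GentleData}

theorem arrOf_mul_mem_sup_arrowModule {a : Q.A} {T : Finset Q.A} (ha : a ∈ T)
    (z : GentleAlgebra k Q) : arrOf k Q a * z ∈ T.sup (arrowModule k Q) :=
  Finset.le_sup (f := arrowModule k Q) ha (mul_mem_span_op_singleton _ z)

theorem pathCoords_mem_supported_of_mem_sup_arrowModule {T : Finset Q.A}
    {x : GentleAlgebra k Q} (hx : x ∈ T.sup (arrowModule k Q)) :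
    pathCoords k Q x ∈ Finsupp.supported k k {p | ∃ a ∈ T, ∃ q, cons a q = p} := by
  obtain ⟨z, rfl⟩ := mem_finset_sup_span_op_singleton.1 hx
  rw [map_sum]
  refine Submodule.sum_mem _ fun a ha ↦ ?_
  rw [pathCoords_mul, pathRep_arrOf]
  exact partialMap_mem_supported (s := Set.univ) (fun q _ _ ↦ ⟨a, ha, q, rfl⟩) fun _ _ ↦ trivial

theorem supIndep_arrowModule (T : Finset Q.A) : T.SupIndep (arrowModule k Q) := by
  refine fun s _ a _ has ↦ Submodule.disjoint_def.2 fun x hxa hxs ↦ ?_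
  rw [← Finset.sup_singleton (f := arrowModule k Q)] at hxa
  have hx := And.intro (pathCoords_mem_supported_of_mem_sup_arrowModule hxa)
    (pathCoords_mem_supported_of_mem_sup_arrowModule hxs)
  rw [← Submodule.mem_inf, ← Finsupp.supported_inter] at hx
  refine mem_of_pathCoords_mem_supported (N := ⊥) ?_ hx
  rintro _ ⟨⟨_, ha, q, rfl⟩, b, hb, q', hq⟩
  obtain ⟨rfl, -⟩ := cons.inj hq
  exact absurd (Finset.mem_singleton.1 ha ▸ hb) has

-- Left multiplication by an element of a sum of arrow modules raises path length.
theorem mul_arrOf_ne_of_mem_sup_arrowModule {T : Finset Q.A} {z : GentleAlgebra k Q}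
    (hz : z ∈ T.sup (arrowModule k Q)) (b : Q.A) : z * arrOf k Q b ≠ arrOf k Q b := by
  intro hzb
  have hb : pathCoords k Q (arrOf k Q b) ∈ Finsupp.supported k k {p | 1 ≤ p.length} := by
    rw [pathCoords_arrOf]
    exact Finsupp.single_mem_supported k 1 (Nat.le_refl 1)
  have hb' : pathCoords k Q (arrOf k Q b) ∈ Finsupp.supported k k {p | 2 ≤ p.length} := by
    obtain ⟨w, rfl⟩ := mem_finset_sup_span_op_singleton.1 hz
    rw [← hzb, pathCoords_mul, map_sum, LinearMap.sum_apply]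
    refine Submodule.sum_mem _ fun a _ ↦ ?_
    rw [map_mul]
    exact pathRep_arrOf_mem_supported_length a (pathRep_mem_supported_length (w a) hb)
  rw [pathCoords_arrOf, Finsupp.mem_supported, Finsupp.support_single _ one_ne_zero] at hb'
  exact absurd (hb' (Finset.mem_singleton_self _)) (Nat.lt_irrefl 1)

open scoped Classical in
variable (Q) in
/-- The arrows `b` for which `a b` is a composable path belonging to the relations. -/
noncomputable def forbiddenSuccessors (a : Q.A) : Finset Q.A :=
  {b | Q.tgt a = Q.src b ∧ Q.rel a b}

theorem mem_forbiddenSuccessors {a b : Q.A} :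
    b ∈ forbiddenSuccessors Q a ↔ Q.tgt a = Q.src b ∧ Q.rel a b := by
  simp only [forbiddenSuccessors, Finset.mem_filter_univ]

theorem arrowModule_eq_map_mulLeft (a : Q.A) : arrowModule k Q a =
    (vertexModule k Q (Q.tgt a)).map (LinearMap.mulLeft _ (arrOf k Q a)) :=
  (map_mulLeft_span_op_singleton (arrOf_mul_idemOf_tgt a)).symm

theorem mem_vertexModule_iff {v : Q.V} {x : GentleAlgebra k Q} :
    x ∈ vertexModule k Q v ↔ idemOf k Q v * x = x :=
  mem_span_op_singleton_iff_of_isIdempotentElem (isIdempotentElem_idemOf v)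

theorem vertexModule_inf_ker_mulLeft_arrOf (a : Q.A) :
    vertexModule k Q (Q.tgt a) ⊓ LinearMap.ker (LinearMap.mulLeft _ (arrOf k Q a)) =
      (forbiddenSuccessors Q a).sup (arrowModule k Q) := by
  apply le_antisymm
  · rintro x ⟨hxv, hxa⟩
    have hx := And.intro (pathCoords_mem_supported_of_idemOf_mul (mem_vertexModule_iff.1 hxv))
      (pathCoords_mem_supported_of_arrOf_mul_eq_zero hxa)
    rw [← Submodule.mem_inf, ← Finsupp.supported_inter] at hx
    refine mem_of_pathCoords_mem_supported
      (N := ((forbiddenSuccessors Q a).sup (arrowModule k Q)).restrictScalars k) ?_ hx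
    rintro (v | ⟨b, q⟩) ⟨hstart, hprep⟩
    · exact absurd hstart.symm hprep
    · refine arrOf_mul_mem_sup_arrowModule (mem_forbiddenSuccessors.2 ⟨hstart.symm, ?_⟩) _
      exact not_not.1 fun hrel ↦ hprep ⟨hstart.symm, hrel⟩
  · refine Finset.sup_le fun b hb ↦ (Submodule.span_singleton_le_iff_mem _ _).2 ?_
    obtain ⟨htgt, hrel⟩ := mem_forbiddenSuccessors.1 hb
    exact ⟨mem_vertexModule_iff.2 (htgt ▸ idemOf_src_mul_arrOf b), arrOf_mul_arrOf_of_rel hrel⟩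

instance projective_vertexModule (v : Q.V) :
    Module.Projective (GentleAlgebra k Q)ᵐᵒᵖ (vertexModule k Q v) :=
  projective_span_op_singleton_of_isIdempotentElem (isIdempotentElem_idemOf v)

theorem hasProjDimLT_sup_arrowModule_iff {T : Finset Q.A} {n : ℕ} :
    HasProjDimLT (GentleAlgebra k Q)ᵐᵒᵖ ↥(T.sup (arrowModule k Q)) n ↔
      ∀ a ∈ T, HasProjDimLT (GentleAlgebra k Q)ᵐᵒᵖ (arrowModule k Q a) n :=
  HasProjDimLT.finset_sup_iff_of_supIndep (supIndep_arrowModule T)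

theorem not_hasProjDimLT_zero_arrowModule (a : Q.A) :
    ¬ HasProjDimLT (GentleAlgebra k Q)ᵐᵒᵖ (arrowModule k Q a) 0 := by
  rw [HasProjDimLT.zero_iff_subsingleton, Submodule.subsingleton_iff_eq_bot]
  exact fun h ↦ arrOf_ne_zero a (Submodule.span_singleton_eq_bot.1 h)

theorem forbiddenSuccessors_eq_empty_of_projective {a : Q.A}
    (h : Module.Projective (GentleAlgebra k Q)ᵐᵒᵖ (arrowModule k Q a)) :
    forbiddenSuccessors Q a = ∅ := by
  obtain ⟨z, hvz, haz, hz⟩ := exists_mul_eq_self_of_projective_span_op_singleton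
    (isIdempotentElem_idemOf (Q.tgt a)) (arrOf_mul_idemOf_tgt a) h
  have hzmem : z ∈ (forbiddenSuccessors Q a).sup (arrowModule k Q) := by
    rw [← vertexModule_inf_ker_mulLeft_arrOf]
    exact ⟨mem_vertexModule_iff.2 hvz, haz⟩
  refine Finset.eq_empty_of_forall_notMem fun b hb ↦ ?_
  obtain ⟨htgt, hrel⟩ := mem_forbiddenSuccessors.1 hb
  exact mul_arrOf_ne_of_mem_sup_arrowModule hzmem b
    (hz _ (htgt ▸ idemOf_src_mul_arrOf b) (arrOf_mul_arrOf_of_rel hrel))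

theorem hasProjDimLT_succ_arrowModule_iff {a : Q.A} {n : ℕ} :
    HasProjDimLT (GentleAlgebra k Q)ᵐᵒᵖ (arrowModule k Q a) (n + 1) ↔
      ∀ b ∈ forbiddenSuccessors Q a,
        HasProjDimLT (GentleAlgebra k Q)ᵐᵒᵖ (arrowModule k Q b) n := by
  refine ⟨fun h ↦ ?_, fun h ↦ ?_⟩
  · cases n with
    | zero =>
      rw [forbiddenSuccessors_eq_empty_of_projective (HasProjDimLT.one_iff_projective.1 h)]
      exact fun b hb ↦ absurd hb (Finset.notMem_empty b)
    | succ n =>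
      rwa [arrowModule_eq_map_mulLeft, HasProjDimLT.add_two_map_iff_inf_ker,
        vertexModule_inf_ker_mulLeft_arrOf, hasProjDimLT_sup_arrowModule_iff] at h
  · rw [arrowModule_eq_map_mulLeft]
    apply HasProjDimLT.succ_map_of_inf_ker
    rwa [vertexModule_inf_ker_mulLeft_arrOf, hasProjDimLT_sup_arrowModule_iff]

theorem exists_isForbiddenPath_add_two_iff {a : Q.A} {n : ℕ} :
    (∃ p, p 0 = a ∧ IsForbiddenPath Q (n + 2) p) ↔
      ∃ b ∈ forbiddenSuccessors Q a, ∃ p, p 0 = b ∧ IsForbiddenPath Q (n + 1) p := by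
  constructor
  · rintro ⟨p, rfl, hp⟩
    exact ⟨p 1, mem_forbiddenSuccessors.2 (hp 0 (by omega)), fun i ↦ p (i + 1), rfl,
      fun i hi ↦ hp (i + 1) (by omega)⟩
  · rintro ⟨_, hb, p, rfl, hp⟩
    refine ⟨fun i ↦ Nat.casesOn i a p, rfl, fun i hi ↦ ?_⟩
    cases i with
    | zero => exact mem_forbiddenSuccessors.1 hb
    | succ i => exact hp i (by omega)

theorem hasProjDimLT_arrowModule_iff {a : Q.A} {n : ℕ} :
    HasProjDimLT (GentleAlgebra k Q)ᵐᵒᵖ (arrowModule k Q a) n ↔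
      ¬ ∃ p, p 0 = a ∧ IsForbiddenPath Q (n + 1) p := by
  induction n generalizing a with
  | zero =>
    exact iff_of_false (not_hasProjDimLT_zero_arrowModule a)
      (not_not.2 ⟨fun _ ↦ a, rfl, fun i hi ↦ absurd hi (by omega)⟩)
  | succ n ih =>
    simp only [hasProjDimLT_succ_arrowModule_iff, exists_isForbiddenPath_add_two_iff, ih,
      not_exists, not_and]

theorem forall_hasProjDimLT_arrowModule_iff {n : ℕ} :
    (∀ a, HasProjDimLT (GentleAlgebra k Q)ᵐᵒᵖ (arrowModule k Q a) n) ↔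
      ∀ p, ¬ IsForbiddenPath Q (n + 1) p := by
  simp only [hasProjDimLT_arrowModule_iff, not_exists, not_and]
  exact ⟨fun h p ↦ h (p 0) p rfl, fun h _ p _ ↦ h p⟩

end ArrowModules

/-- The ideal generated by the relations is admissible. As the relations are paths of length two and
there are finitely many arrows, this amounts to a bound on the length of paths avoiding relations,
expressed here as the absence of an infinite such path. -/
def IsAdmissible (Q : GentleData) : Prop :=
  WellFounded fun b a : Q.A ↦ Q.tgt a = Q.src b ∧ ¬ Q.rel a b

theorem IsGentle.isAdmissible {Q : GentleData} (hQ : IsGentle Q) : IsAdmissible Q := by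
  obtain ⟨-, -, -, -, -, -, -, N, hN⟩ := hQ
  exact wellFounded_iff_isEmpty_descending_chain.2 ⟨fun ⟨p, hp⟩ ↦ hN p fun i _ ↦ hp i⟩

section Admissible

open FormalPath

variable {k : Type} [Field k] {Q : GentleData}

variable (k) in
theorem finite_range_toAlgebra_cons (hQ : IsAdmissible Q) (a : Q.A) :
    (Set.range fun p ↦ (cons a p).toAlgebra k).Finite := by
  induction a using hQ.induction with
  | _ a ih =>
    have htails := ((Set.finite_range (idemOf k Q)).union
      (Set.Finite.biUnion (Set.toFinite {b | Q.tgt a = Q.src b ∧ ¬ Q.rel a b}) ih)).image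
        (arrOf k Q a * ·)
    refine (htails.insert 0).subset (Set.range_subset_iff.2 fun p ↦ ?_)
    by_cases hp : CanPrepend a p
    · refine Or.inr (Set.mem_image_of_mem _ ?_)
      cases p with
      | nil v => exact Or.inl ⟨v, rfl⟩
      | cons b p => exact Or.inr (Set.mem_biUnion (x := b) hp ⟨p, rfl⟩)
    · exact Or.inl (arrOf_mul_toAlgebra_eq_zero hp)

theorem moduleFinite_gentleAlgebra (hQ : IsAdmissible Q) : Module.Finite k (GentleAlgebra k Q) := by
  have hfin : (Set.range (toAlgebra (Q := Q) k)).Finite := by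
    refine ((Set.finite_range (idemOf k Q)).union
      (Set.finite_iUnion (finite_range_toAlgebra_cons k hQ))).subset ?_
    rintro _ ⟨v | ⟨a, p⟩, rfl⟩
    · exact Or.inl ⟨v, rfl⟩
    · exact Or.inr (Set.mem_iUnion_of_mem a ⟨p, rfl⟩)
  have hspan : Submodule.span k (Set.range (toAlgebra (Q := Q) k)) = ⊤ := by
    rw [← Finsupp.range_linearCombination, LinearMap.range_eq_top]
    exact fun x ↦ ⟨_, pathEval_pathCoords x⟩
  exact ⟨hspan ▸ Submodule.fg_span hfin⟩

section RightModule

variable {S : Type} [AddCommGroup S] [Module (GentleAlgebra k Q)ᵐᵒᵖ S]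

theorem exists_ne_zero_forall_op_arrOf_smul_eq_zero [Nontrivial S] (hQ : IsAdmissible Q) :
    ∃ m : S, m ≠ 0 ∧ ∀ a, op (arrOf k Q a) • m = 0 := by
  by_contra! hne
  have hzero (a : Q.A) : ∀ m : S, op (arrOf k Q a) • m = 0 := by
    induction a using hQ.induction with
    | _ a ih =>
      intro m
      by_contra hma
      obtain ⟨b, hb⟩ := hne _ hma
      rw [smul_smul, ← op_mul] at hb
      have hab : Q.tgt a = Q.src b ∧ ¬ Q.rel a b := by
        by_contra hab
        refine hb ?_
        rw [arrOf_mul_arrOf_eq_zero fun h ↦ not_not.1 fun hr ↦ hab ⟨h, hr⟩, op_zero, zero_smul]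
      exact hb (by rw [op_mul, ← smul_smul, ih b hab])
  obtain ⟨m, hm⟩ := exists_ne (0 : S)
  obtain ⟨a, ha⟩ := hne m hm
  exact ha (hzero a m)

theorem exists_op_idemOf_smul_ne_zero {m : S} (hm : m ≠ 0) : ∃ v, op (idemOf k Q v) • m ≠ 0 := by
  by_contra! hzero
  refine hm ?_
  rw [← one_smul (GentleAlgebra k Q)ᵐᵒᵖ m, ← op_one, ← sum_idemOf, Finset.op_sum, Finset.sum_smul]
  exact Finset.sum_eq_zero fun v _ ↦ hzero v

theorem op_arrOf_smul_op_idemOf_smul_eq_zero {m : S} (hm : ∀ a, op (arrOf k Q a) • m = 0)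
    (v : Q.V) (a : Q.A) : op (arrOf k Q a) • op (idemOf k Q v) • m = 0 := by
  rw [smul_smul, ← op_mul]
  by_cases hv : v = Q.src a
  · rw [hv, idemOf_src_mul_arrOf, hm]
  · rw [idemOf_mul_arrOf_of_ne hv, op_zero, zero_smul]

end RightModule

theorem vertexModule_le_span_sup (v : Q.V) : (vertexModule k Q v).restrictScalars k ≤
    Submodule.span k {idemOf k Q v} ⊔
      (({a | Q.src a = v} : Finset Q.A).sup (arrowModule k Q)).restrictScalars k := by
  intro x hx
  refine mem_of_pathCoords_mem_supported ?_
    (pathCoords_mem_supported_of_idemOf_mul (mem_vertexModule_iff.1 hx))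
  rintro (w | ⟨a, p⟩) rfl
  · exact Submodule.mem_sup_left (Submodule.mem_span_singleton_self _)
  · have ha : a ∈ ({b | Q.src b = (cons a p).start} : Finset Q.A) :=
      (Finset.mem_filter_univ a).2 rfl
    exact Submodule.mem_sup_right (arrOf_mul_mem_sup_arrowModule ha (p.toAlgebra k))

theorem vertexModule_inf_ker_orbitMap {S : Type} [AddCommGroup S]
    [Module (GentleAlgebra k Q)ᵐᵒᵖ S] {m : S} {v : Q.V} (hm : m ≠ 0)
    (hmv : op (idemOf k Q v) • m = m) (hma : ∀ a, op (arrOf k Q a) • m = 0) :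
    vertexModule k Q v ⊓ LinearMap.ker (orbitMap m) =
      ({a | Q.src a = v} : Finset Q.A).sup (arrowModule k Q) := by
  have hker : ({a | Q.src a = v} : Finset Q.A).sup (arrowModule k Q) ≤
      LinearMap.ker (orbitMap m) :=
    Finset.sup_le fun a _ ↦ (Submodule.span_singleton_le_iff_mem _ _).2 (hma a)
  apply le_antisymm
  · rintro x ⟨hxv, hxm⟩
    obtain ⟨_, hc, y, hy, rfl⟩ := Submodule.mem_sup.1 (vertexModule_le_span_sup v hxv)
    obtain ⟨c, rfl⟩ := Submodule.mem_span_singleton.1 hc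
    have hcm : c • idemOf k Q v ∈ (LinearMap.ker (orbitMap m)).restrictScalars k :=
      (Submodule.add_mem_iff_left _ (hker hy)).1 hxm
    obtain rfl : c = 0 := by
      by_contra hc
      exact hm (hmv.symm.trans ((Submodule.smul_mem_iff _ hc).1 hcm))
    rwa [zero_smul, zero_add]
  · refine le_inf (Finset.sup_le fun a ha ↦ (Submodule.span_singleton_le_iff_mem _ _).2 ?_) hker
    rw [mem_vertexModule_iff, ← (Finset.mem_filter_univ a).1 ha, idemOf_src_mul_arrOf]

theorem hasProjDimLT_succ_of_isSimpleModule (hQ : IsAdmissible Q) {n : ℕ}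
    (h : ∀ a, HasProjDimLT (GentleAlgebra k Q)ᵐᵒᵖ (arrowModule k Q a) n) (S : Type)
    [AddCommGroup S] [Module (GentleAlgebra k Q)ᵐᵒᵖ S]
    [IsSimpleModule (GentleAlgebra k Q)ᵐᵒᵖ S] :
    HasProjDimLT (GentleAlgebra k Q)ᵐᵒᵖ S (n + 1) := by
  have := IsSimpleModule.nontrivial (GentleAlgebra k Q)ᵐᵒᵖ S
  obtain ⟨m, hm, hma⟩ := exists_ne_zero_forall_op_arrOf_smul_eq_zero (k := k) (S := S) hQ
  obtain ⟨v, hv⟩ := exists_op_idemOf_smul_ne_zero (k := k) (Q := Q) hm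
  have hidem := isIdempotentElem_idemOf (k := k) v
  have hvv : op (idemOf k Q v) • op (idemOf k Q v) • m = op (idemOf k Q v) • m := by
    rw [smul_smul, ← op_mul, hidem.eq]
  refine HasProjDimLT.succ_of_isSimpleModule_of_inf_ker_orbitMap hidem hv hvv ?_
  have hinf := vertexModule_inf_ker_orbitMap hv hvv (op_arrOf_smul_op_idemOf_smul_eq_zero hma v)
  rw [vertexModule] at hinf
  rw [hinf, hasProjDimLT_sup_arrowModule_iff]
  exact fun a _ ↦ h a

theorem isFiniteLength_of_moduleFinite (hQ : IsAdmissible Q) (M : Type) [AddCommGroup M]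
    [Module (GentleAlgebra k Q)ᵐᵒᵖ M] [Module.Finite (GentleAlgebra k Q)ᵐᵒᵖ M] :
    IsFiniteLength (GentleAlgebra k Q)ᵐᵒᵖ M := by
  have := moduleFinite_gentleAlgebra (k := k) hQ
  have : Module.Finite k (GentleAlgebra k Q)ᵐᵒᵖ :=
    Module.Finite.equiv (MulOpposite.opLinearEquiv k)
  have : IsArtinianRing (GentleAlgebra k Q)ᵐᵒᵖ := IsArtinianRing.of_finite k _
  exact isFiniteLength_iff_isNoetherian_isArtinian.2 ⟨inferInstance, inferInstance⟩

theorem globalDim_lt_top_iff_exists_forall_not_isForbiddenPath (hQ : IsAdmissible Q) :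
    globalDim (GentleAlgebra k Q)ᵐᵒᵖ < ⊤ ↔ ∃ n, ∀ p, ¬ IsForbiddenPath Q (n + 1) p := by
  simp only [← forall_hasProjDimLT_arrowModule_iff (k := k),
    globalDim_lt_top_iff_exists_hasProjDimLT]
  refine ⟨fun ⟨n, hn⟩ ↦ ⟨n + 1, fun a ↦ hn _ (Module.Finite.span_singleton _ _)⟩,
    fun ⟨n, hn⟩ ↦ ⟨n, fun M _ _ _ ↦ ?_⟩⟩
  exact HasProjDimLT.of_isFiniteLength (isFiniteLength_of_moduleFinite hQ M)
    fun S _ _ _ ↦ hasProjDimLT_succ_of_isSimpleModule hQ hn S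

end Admissible

section ForbiddenPaths

variable {Q : GentleData}

theorem AGzero_eq_zero_iff {ℓ : ℕ} [NeZero ℓ] :
    AGzero Q ℓ = 0 ↔ ∀ c : ZMod ℓ → Q.A, IsOCFCycle Q c → ¬ Function.Injective c := by
  rw [AGzero, Finite.card_eq_zero_iff, ← not_nonempty_iff, nonempty_quotient_iff,
    nonempty_subtype]
  push Not
  rfl

theorem IsOCFCycle.isForbiddenPath {ℓ : ℕ} {c : ZMod ℓ → Q.A} (hc : IsOCFCycle Q c) (m : ℕ) :
    IsForbiddenPath Q m fun i ↦ c i := by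
  intro i _
  dsimp only
  rw [Nat.cast_succ]
  exact hc i

theorem IsForbiddenPath.isOCFCycle_of_apply_eq {m : ℕ} {p : ℕ → Q.A} (hp : IsForbiddenPath Q m p)
    {i ℓ : ℕ} [NeZero ℓ] (hm : i + ℓ < m) (heq : p (i + ℓ) = p i) :
    IsOCFCycle Q fun x : ZMod ℓ ↦ p (i + x.val) := by
  intro x
  have hsucc : p (i + (x + 1).val) = p (i + x.val + 1) := by
    have hval : (x + 1).val = (x.val + 1) % ℓ := by
      rw [← ZMod.val_natCast, Nat.cast_succ, ZMod.natCast_zmod_val]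
    obtain hlt | hlast := Nat.lt_or_eq_of_le (show x.val + 1 ≤ ℓ from x.val_lt)
    · rw [hval, Nat.mod_eq_of_lt hlt, add_assoc]
    · rw [hval, add_assoc, hlast, Nat.mod_self, add_zero, heq]
  dsimp only
  rw [hsucc]
  exact hp _ (by have := x.val_lt; omega)

-- The shortest stretch between two equal arrows closes up to a cycle without repeated arrows.
theorem IsForbiddenPath.exists_injective_isOCFCycle {m : ℕ} {p : ℕ → Q.A}
    (hp : IsForbiddenPath Q m p) (hm : Fintype.card Q.A < m) :
    ∃ ℓ, 1 ≤ ℓ ∧ ∃ c : ZMod ℓ → Q.A, IsOCFCycle Q c ∧ Function.Injective c := by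
  classical
  have hrepeat : ∃ ℓ, 1 ≤ ℓ ∧ ∃ i, i + ℓ < m ∧ p (i + ℓ) = p i := by
    obtain ⟨i, j, hij, h⟩ :=
      Fintype.exists_ne_map_eq_of_card_lt (fun i : Fin m ↦ p i) (by rwa [Fintype.card_fin])
    obtain hlt | hlt := lt_or_gt_of_ne (Fin.val_ne_of_ne hij)
    · exact ⟨j - i, by omega, i, by omega, by rw [Nat.add_sub_of_le hlt.le, h]⟩
    · exact ⟨i - j, by omega, j, by omega, by rw [Nat.add_sub_of_le hlt.le, h]⟩
  obtain ⟨hℓ, i, hi, heq⟩ := Nat.find_spec hrepeat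
  set ℓ := Nat.find hrepeat
  have : NeZero ℓ := ⟨by omega⟩
  have hne (x y : ZMod ℓ) (hxy : x.val < y.val) : p (i + y.val) ≠ p (i + x.val) := fun h ↦ by
    have hy := y.val_lt
    refine Nat.find_min hrepeat (m := y.val - x.val) (by omega)
      ⟨by omega, i + x.val, by omega, ?_⟩
    rwa [add_assoc, Nat.add_sub_of_le hxy.le]
  refine ⟨ℓ, hℓ, _, hp.isOCFCycle_of_apply_eq hi heq, fun x y hxy ↦ ZMod.val_injective ℓ ?_⟩
  by_contra hval
  exact (lt_or_gt_of_ne hval).elim (fun h ↦ hne x y h hxy.symm) fun h ↦ hne y x h hxy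

theorem exists_forall_not_isForbiddenPath_iff :
    (∃ n, ∀ p, ¬ IsForbiddenPath Q (n + 1) p) ↔ ∀ ℓ, 1 ≤ ℓ → AGzero Q ℓ = 0 := by
  constructor
  · rintro ⟨n, hn⟩ ℓ hℓ
    have : NeZero ℓ := ⟨by omega⟩
    exact AGzero_eq_zero_iff.2 fun c hc ↦ absurd (hc.isForbiddenPath _) (hn _)
  · refine fun h ↦ ⟨Fintype.card Q.A, fun p hp ↦ ?_⟩
    obtain ⟨ℓ, hℓ, c, hc, hinj⟩ := hp.exists_injective_isOCFCycle (Nat.lt_succ_self _)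
    have : NeZero ℓ := ⟨by omega⟩
    exact AGzero_eq_zero_iff.1 (h ℓ hℓ) c hc hinj

end ForbiddenPaths

theorem globalDim_lt_top_iff_forall_AGzero_eq_zero {k : Type} [Field k] {Q : GentleData}
    (hQ : IsAdmissible Q) :
    globalDim (GentleAlgebra k Q)ᵐᵒᵖ < ⊤ ↔ ∀ ℓ, 1 ≤ ℓ → AGzero Q ℓ = 0 :=
  (globalDim_lt_top_iff_exists_forall_not_isForbiddenPath hQ).trans
    exists_forall_not_isForbiddenPath_iff

theorem globalDim_finite_iff_of_AG_equivalent_general {k k' : Type} [Field k] [Field k']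
    {Q Q' : GentleData} (hQ : IsAdmissible Q) (hQ' : IsAdmissible Q')
    (hAG : ∀ ℓ, 1 ≤ ℓ → (AGzero Q ℓ = 0 ↔ AGzero Q' ℓ = 0)) :
    globalDim (GentleAlgebra k Q)ᵐᵒᵖ < ⊤ ↔ globalDim (GentleAlgebra k' Q')ᵐᵒᵖ < ⊤ := by
  rw [globalDim_lt_top_iff_forall_AGzero_eq_zero hQ,
    globalDim_lt_top_iff_forall_AGzero_eq_zero hQ']
  exact forall₂_congr hAG

/-- If two gentle algebras are AG-equivalent, then one has
finite global dimension if and only if the other does. -/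
theorem globalDim_finite_iff_of_AG_equivalent
    (k : Type) [Field k] [IsAlgClosed k] (Q Q' : GentleData)
    (hQ : IsGentle Q) (hQ' : IsGentle Q')
    (hAG : ∀ ℓ : ℕ, AGzero Q ℓ = AGzero Q' ℓ) :
    globalDim (GentleAlgebra k Q)ᵐᵒᵖ < ⊤ ↔ globalDim (GentleAlgebra k Q')ᵐᵒᵖ < ⊤ :=
  globalDim_finite_iff_of_AG_equivalent_general hQ.isAdmissible hQ'.isAdmissible
    fun ℓ _ ↦ by rw [hAG]
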